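/- Let p be an odd prime, let d and r be positive integers with d > r, let ρ₁, ρ₂, …, ρᵣ be metrics on ℝᵈ each of which induces the standard (Euclidean) topology of ℝᵈ, and fix a sequence t₁, t₂, …, tᵣ with each tᵢ ∈ {1, 2, …, (p−1)/2}. Then there exist p distinct points x₀, x₁, …, x_{p−1} in ℝᵈ, indexed by the field 𝔽_p, such that for each i = 1, …, r the p-gon C_{tᵢ} is ρᵢ-equilateral, i.e. ρᵢ(x₀, x_{tᵢ}) = ρᵢ(x_{tᵢ}, x_{2tᵢ}) = ⋯ = ρᵢ(x_{(p−1)tᵢ}, x₀). -/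

import Mathlib

/-- `ρ` is a metric on `E` that induces the (given) standard topology of `E`. -/
def IsMetricEquivToStd {E : Type*} [TopologicalSpace E] (ρ : E → E → ℝ) : Prop :=
  (∀ x y, ρ x y = ρ y x) ∧
  (∀ x y, ρ x y = 0 ↔ x = y) ∧
  (∀ x y z, ρ x z ≤ ρ x y + ρ y z) ∧
  (∀ s : Set E, IsOpen s ↔ ∀ x ∈ s, ∃ ε > 0, {y | ρ x y < ε} ⊆ s)

/-- Chains of finite sequences of elements of `α`, with coefficients in `F`. -/
abbrev ListChain (F α : Type*) [CommRing F] := List α →₀ F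

namespace ListChain

variable {F α β γ : Type*} [CommRing F]

/-- The chain consisting of one list with coefficient `1`. -/
noncomputable abbrev of (l : List α) : ListChain F α := Finsupp.single l 1

/-- Chains supported on a given set of lists. -/
noncomputable abbrev on (F : Type*) [CommRing F] (S : Set (List α)) :
    Submodule F (ListChain F α) := Finsupp.supported F F S

lemma of_mem_on {S : Set (List α)} {l : List α} (hl : l ∈ S) : (of l : ListChain F α) ∈ on F S :=
  Finsupp.single_mem_supported F 1 hl

lemma induct_on {S : Set (List α)} {q : ListChain F α → Prop} {c : ListChain F α}
    (hc : c ∈ on F S) (h0 : q 0) (hadd : ∀ x y, q x → q y → q (x + y))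
    (hsmul : ∀ (r : F) x, q x → q (r • x)) (hof : ∀ l ∈ S, q (of l)) : q c := by
  rw [on, Finsupp.supported_eq_span_single] at hc
  induction hc using Submodule.span_induction with
  | mem x hx => obtain ⟨l, hl, rfl⟩ := hx; exact hof l hl
  | zero => exact h0
  | add x y _ _ hx hy => exact hadd x y hx hy
  | smul r x _ hx => exact hsmul r x hx

lemma apply_mem_of_mem_on {M : Type*} [AddCommGroup M] [Module F M] {S : Set (List α)}
    (T : ListChain F α →ₗ[F] M) {W : Submodule F M} (h : ∀ l ∈ S, T (of l) ∈ W)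
    {c : ListChain F α} (hc : c ∈ on F S) : T c ∈ W :=
  induct_on (q := fun c ↦ T c ∈ W) hc (by simp) (fun x y hx hy ↦ by
    rw [map_add]; exact W.add_mem hx hy) (fun r x hx ↦ by
    rw [map_smul]; exact W.smul_mem r hx) h

lemma eqOn_of_mem_on {M : Type*} [AddCommGroup M] [Module F M] {S : Set (List α)}
    (T T' : ListChain F α →ₗ[F] M) (h : ∀ l ∈ S, T (of l) = T' (of l))
    {c : ListChain F α} (hc : c ∈ on F S) : T c = T' c :=
  induct_on (q := fun c ↦ T c = T' c) hc (by simp) (fun x y hx hy ↦ by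
    rw [map_add, map_add, hx, hy]) (fun r x hx ↦ by rw [map_smul, map_smul, hx]) h

/-- Prepend `a` to each list of a chain. -/
noncomputable def cons (a : α) : ListChain F α →ₗ[F] ListChain F α :=
  Finsupp.lmapDomain F F (List.cons a)

/-- Apply `f` to all entries of all lists of a chain. -/
noncomputable def map (f : α → β) : ListChain F α →ₗ[F] ListChain F β :=
  Finsupp.lmapDomain F F (List.map f)

/-- The linear extension of a function on lists. -/
noncomputable def ext {M : Type*} [AddCommGroup M] [Module F M] (f : List α → M) :
    ListChain F α →ₗ[F] M := Finsupp.linearCombination F f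

@[simp] lemma cons_of (a : α) (l : List α) : cons a (of l : ListChain F α) = of (a :: l) := by
  simp [cons]

@[simp] lemma map_of (f : α → β) (l : List α) :
    map f (of l : ListChain F α) = of (l.map f) := by
  simp [map]

@[simp] lemma ext_of {M : Type*} [AddCommGroup M] [Module F M] (f : List α → M) (l : List α) :
    ext f (of l : ListChain F α) = f l := by
  simp [ext]

lemma linearMap_ext {M : Type*} [AddCommGroup M] [Module F M] {T T' : ListChain F α →ₗ[F] M}
    (h : ∀ l, T (of l) = T' (of l)) : T = T' :=
  Finsupp.lhom_ext' fun l ↦ LinearMap.ext_ring (h l)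

lemma map_cons (f : α → β) (a : α) (c : ListChain F α) :
    map f (cons a c) = cons (f a) (map f c) := by
  have : (map f ∘ₗ cons a : ListChain F α →ₗ[F] _) = cons (f a) ∘ₗ map f :=
    linearMap_ext fun l ↦ by simp
  exact LinearMap.congr_fun this c

lemma map_map (f : α → β) (g : β → γ) (c : ListChain F α) :
    map g (map f c) = map (g ∘ f) c := by
  have : (map g ∘ₗ map f : ListChain F α →ₗ[F] _) = map (g ∘ f) :=
    linearMap_ext fun l ↦ by simp
  exact LinearMap.congr_fun this c

lemma map_id (c : ListChain F α) : map id c = c := by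
  have : (map id : ListChain F α →ₗ[F] _) = LinearMap.id := linearMap_ext fun l ↦ by simp
  exact LinearMap.congr_fun this c

/-- The (augmented) simplicial boundary of a list. -/
noncomputable def bdryList : List α → ListChain F α
  | [] => 0
  | a :: l => of l - cons a (bdryList l)

/-- The (augmented) simplicial boundary. -/
noncomputable def bdry : ListChain F α →ₗ[F] ListChain F α := ext bdryList

@[simp] lemma bdry_nil : bdry (of [] : ListChain F α) = 0 := by simp [bdry, bdryList]

lemma bdry_cons (a : α) (c : ListChain F α) : bdry (cons a c) = c - cons a (bdry c) := by
  have : (bdry ∘ₗ cons a : ListChain F α →ₗ[F] _) = LinearMap.id - cons a ∘ₗ bdry :=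
    linearMap_ext fun l ↦ by simp [bdry, bdryList]
  exact LinearMap.congr_fun this c

lemma bdry_of_cons (a : α) (l : List α) :
    bdry (of (a :: l) : ListChain F α) = of l - cons a (bdry (of l)) := by
  rw [← cons_of, bdry_cons]

lemma bdry_bdry (c : ListChain F α) : bdry (bdry c) = 0 := by
  have : (bdry ∘ₗ bdry : ListChain F α →ₗ[F] _) = 0 := by
    refine linearMap_ext fun l ↦ ?_
    induction l with
    | nil => simp
    | cons a l ih =>
      simp only [LinearMap.comp_apply, LinearMap.zero_apply] at ih ⊢
      rw [bdry_of_cons, map_sub, bdry_cons, ih]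
      simp
  exact LinearMap.congr_fun this c

lemma bdry_map (f : α → β) (c : ListChain F α) : bdry (map f c) = map f (bdry c) := by
  have : (bdry ∘ₗ map f : ListChain F α →ₗ[F] _) = map f ∘ₗ bdry := by
    refine linearMap_ext fun l ↦ ?_
    induction l with
    | nil => simp
    | cons a l ih =>
      simp only [LinearMap.comp_apply, map_of] at ih ⊢
      rw [List.map_cons, bdry_of_cons, ih, bdry_of_cons, map_sub, map_cons, map_of]
  exact LinearMap.congr_fun this c

lemma cons_mem_on {S T : Set (List α)} {a : α} (h : ∀ l ∈ S, a :: l ∈ T)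
    {c : ListChain F α} (hc : c ∈ on F S) : cons a c ∈ on F T :=
  apply_mem_of_mem_on _ (fun l hl ↦ by rw [cons_of]; exact of_mem_on (h l hl)) hc

lemma map_mem_on {S : Set (List α)} {T : Set (List β)} {f : α → β} (h : ∀ l ∈ S, l.map f ∈ T)
    {c : ListChain F α} (hc : c ∈ on F S) : map f c ∈ on F T :=
  apply_mem_of_mem_on _ (fun l hl ↦ by rw [map_of]; exact of_mem_on (h l hl)) hc

/-- Faces of a list of length `n + 1` have length `n`. -/
lemma bdry_mem_on_length {n : ℕ} {c : ListChain F α} (hc : c ∈ on F {l : List α | l.length = n + 1}) :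
    bdry c ∈ on F {l : List α | l.length = n} := by
  refine apply_mem_of_mem_on _ (fun l hl ↦ ?_) hc
  clear hc
  induction l generalizing n with
  | nil => simp at hl
  | cons a l ih =>
    simp only [Set.mem_ofPred_eq, List.length_cons, Nat.add_right_cancel_iff] at hl
    rw [bdry_of_cons]
    refine Submodule.sub_mem _ (of_mem_on hl) ?_
    cases n with
    | zero => rw [List.length_eq_zero_iff.mp hl]; simp
    | succ n => exact cons_mem_on (fun l hl ↦ by simpa using hl) (ih hl)

/-- The sum of all coefficients. -/
noncomputable def coeffSum : ListChain F α →ₗ[F] F := ext fun _ ↦ 1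

lemma coeffSum_map (f : α → β) (c : ListChain F α) : coeffSum (map f c) = coeffSum c := by
  have : (coeffSum ∘ₗ map f : ListChain F α →ₗ[F] _) = coeffSum :=
    linearMap_ext fun l ↦ by simp [coeffSum]
  exact LinearMap.congr_fun this c

lemma map_const {n : ℕ} (b : β) {c : ListChain F α} (hc : c ∈ on F {l : List α | l.length = n}) :
    map (fun _ ↦ b) c = coeffSum c • of (List.replicate n b) := by
  refine eqOn_of_mem_on (map fun _ ↦ b) (coeffSum.smulRight (of (List.replicate n b)))
    (fun l hl ↦ ?_) hc
  simp only [Set.mem_ofPred_eq] at hl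
  simp [coeffSum, ← hl]

/-- The prism between the images of a list under two maps. -/
noncomputable def prismList (f g : α → β) : List α → ListChain F β
  | [] => 0
  | a :: l => of (f a :: g a :: l.map g) - cons (f a) (prismList f g l)

/-- The prism operator, a chain homotopy from `map f` to `map g`. -/
noncomputable def prism (f g : α → β) : ListChain F α →ₗ[F] ListChain F β := ext (prismList f g)

lemma prism_of_cons (f g : α → β) (a : α) (l : List α) :
    prism f g (of (a :: l) : ListChain F α) =
      of (f a :: g a :: l.map g) - cons (f a) (prism f g (of l)) := by
  simp [prism, prismList]

lemma prism_cons (f g : α → β) (a : α) (c : ListChain F α) :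
    prism f g (cons a c) = cons (f a) (cons (g a) (map g c)) - cons (f a) (prism f g c) := by
  have : (prism f g ∘ₗ cons a : ListChain F α →ₗ[F] _) =
      cons (f a) ∘ₗ cons (g a) ∘ₗ map g - cons (f a) ∘ₗ prism f g :=
    linearMap_ext fun l ↦ by simp [prism_of_cons]
  exact LinearMap.congr_fun this c

lemma bdry_prism (f g : α → β) (c : ListChain F α) :
    bdry (prism f g c) = map g c - map f c - prism f g (bdry c) := by
  have : (bdry ∘ₗ prism f g : ListChain F α →ₗ[F] _) = map g - map f - prism f g ∘ₗ bdry := by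
    refine linearMap_ext fun l ↦ ?_
    induction l with
    | nil => simp [prism, prismList]
    | cons a l ih =>
      simp only [LinearMap.comp_apply, LinearMap.sub_apply, map_of] at ih ⊢
      rw [prism_of_cons, map_sub, bdry_of_cons, bdry_of_cons, bdry_cons, ih, bdry_of_cons,
        map_sub (prism (F := F) f g), prism_cons, ← bdry_map]
      simp only [map_sub, map_of, cons_of, List.map_cons]
      abel
  exact LinearMap.congr_fun this c

lemma prism_mem_on {n : ℕ} {S : Set (List α)} {T : Set (List β)} (f g : α → β)
    (hn : ∀ l ∈ S, l.length = n)
    (h : ∀ l ∈ S, ∀ s : List β, s.length = n + 1 → (∀ b ∈ s, ∃ a ∈ l, b = f a ∨ b = g a) → s ∈ T)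
    {c : ListChain F α} (hc : c ∈ on F S) : prism f g c ∈ on F T := by
  have key : ∀ l : List α, prism f g (of l : ListChain F α) ∈
      on F {s : List β | s.length = l.length + 1 ∧ ∀ b ∈ s, ∃ a ∈ l, b = f a ∨ b = g a} := by
    intro l
    induction l with
    | nil => simp [prism, prismList]
    | cons a l ih =>
      rw [prism_of_cons]
      refine Submodule.sub_mem _ (of_mem_on ?_) (cons_mem_on ?_ ih)
      · refine ⟨by simp, ?_⟩
        simp only [List.mem_cons, List.mem_map]
        rintro b (rfl | rfl | ⟨a', ha', rfl⟩)
        · exact ⟨a, .inl rfl, .inl rfl⟩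
        · exact ⟨a, .inl rfl, .inr rfl⟩
        · exact ⟨a', .inr ha', .inr rfl⟩
      · rintro s ⟨hs, hs'⟩
        refine ⟨by simp [hs], ?_⟩
        simp only [List.mem_cons]
        rintro b (rfl | hb)
        · exact ⟨a, .inl rfl, .inl rfl⟩
        · obtain ⟨a', ha', h⟩ := hs' b hb
          exact ⟨a', .inr ha', h⟩
  refine apply_mem_of_mem_on _ (fun l hl ↦ ?_) hc
  refine Finsupp.supported_mono ?_ (key l)
  rintro s ⟨hs, hs'⟩
  exact h l hl s (by rw [hs, hn l hl]) hs'

section Period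

/-- The operator `1 + g + ⋯ + g ^ (p - 1)` for even `n` and `g - 1` for odd `n`. -/
noncomputable def periodic {M : Type*} [AddCommGroup M] [Module F M] (p : ℕ) (g : Module.End F M)
    (n : ℕ) : Module.End F M :=
  if Even n then ∑ i ∈ Finset.range p, g ^ i else g - 1

variable {M M' : Type*} [AddCommGroup M] [Module F M] [AddCommGroup M'] [Module F M'] {p : ℕ}

lemma periodic_succ_periodic {g : Module.End F M} (hg : g ^ p = 1) (n : ℕ) (x : M) :
    periodic p g (n + 1) (periodic p g n x) = 0 := by
  rw [← Module.End.mul_apply]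
  by_cases hn : Even n
  · simp [periodic, hn, Nat.even_add_one, mul_geom_sum, hg]
  · simp [periodic, hn, Nat.even_add_one, geom_sum_mul, hg]

lemma periodic_add_two (g : Module.End F M) (n : ℕ) : periodic p g (n + 2) = periodic p g n := by
  simp [periodic, Nat.even_add]

lemma pow_apply_comm {S : Submodule F M} {g : Module.End F M} {g' : Module.End F M'}
    {T : M →ₗ[F] M'} (hS : ∀ x ∈ S, g x ∈ S) (h : ∀ x ∈ S, T (g x) = g' (T x)) (i : ℕ) {x : M}
    (hx : x ∈ S) : (g ^ i) x ∈ S ∧ T ((g ^ i) x) = (g' ^ i) (T x) := by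
  induction i with
  | zero => simpa using hx
  | succ i ih =>
    rw [pow_succ', pow_succ', Module.End.mul_apply, Module.End.mul_apply, h _ ih.1, ih.2]
    exact ⟨hS _ ih.1, rfl⟩

lemma periodic_mem {S : Submodule F M} {g : Module.End F M} (hS : ∀ x ∈ S, g x ∈ S) (n : ℕ)
    {x : M} (hx : x ∈ S) : periodic p g n x ∈ S := by
  by_cases hn : Even n
  · simp only [periodic, hn, if_true, LinearMap.sum_apply]
    exact Submodule.sum_mem _ fun i _ ↦
      (pow_apply_comm (g' := g) (T := LinearMap.id) hS (fun _ _ ↦ rfl) i hx).1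
  · simpa [periodic, hn] using S.sub_mem (hS x hx) hx

lemma periodic_comm {S : Submodule F M} {g : Module.End F M} {g' : Module.End F M'}
    {T : M →ₗ[F] M'} (hS : ∀ x ∈ S, g x ∈ S) (h : ∀ x ∈ S, T (g x) = g' (T x)) (n : ℕ) {x : M}
    (hx : x ∈ S) : T (periodic p g n x) = periodic p g' n (T x) := by
  by_cases hn : Even n
  · simp only [periodic, hn, if_true, LinearMap.sum_apply, map_sum]
    exact Finset.sum_congr rfl fun i _ ↦ (pow_apply_comm hS h i hx).2
  · simp [periodic, hn, h x hx]

/-- If `P` is a projection onto a fundamental domain, the periodic complex is exact. -/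
lemma exists_periodic_eq {g : Module.End F M} (hg : g ^ p = 1) {S : Submodule F M}
    (hS : ∀ x ∈ S, g x ∈ S) {P : Module.End F M} (hPS : ∀ x ∈ S, P x ∈ S)
    (hP : ∀ x ∈ S, ∑ i ∈ Finset.range p, (g ^ i) (P ((g ^ (p - i)) x)) = x)
    (n : ℕ) {x : M} (hxS : x ∈ S) (hx : periodic p g n x = 0) :
    ∃ y ∈ S, periodic p g (n + 1) y = x := by
  have hpow : ∀ i, ∀ x ∈ S, (g ^ i) x ∈ S := fun i x hx ↦
    (pow_apply_comm (g' := g) (T := LinearMap.id) hS (fun _ _ ↦ rfl) i hx).1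
  by_cases hn : Even n
  · simp only [periodic, hn, if_true, Nat.even_add_one, not_true, if_false] at hx ⊢
    refine ⟨∑ i ∈ Finset.range p, (∑ j ∈ Finset.range i, g ^ j) (P ((g ^ (p - i)) x)),
      Submodule.sum_mem _ fun i _ ↦ ?_, ?_⟩
    · rw [LinearMap.sum_apply]
      exact Submodule.sum_mem _ fun j _ ↦ hpow _ _ (hPS _ (hpow _ _ hxS))
    · have h1 : ∑ i ∈ Finset.range p, P ((g ^ (p - i)) x) = 0 := by
        have h2 : ∑ i ∈ Finset.range p, g ^ (p - i) = ∑ i ∈ Finset.range p, g ^ i := by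
          rw [← Finset.sum_range_reflect]
          have := Finset.sum_range_succ (fun i ↦ g ^ i) p
          rw [Finset.sum_range_succ', hg, pow_zero, add_left_inj] at this
          rw [← this]
          refine Finset.sum_congr rfl fun i hi ↦ ?_
          have := Finset.mem_range.mp hi
          congr 1
          omega
        rw [← map_sum, ← LinearMap.sum_apply, h2, hx, map_zero]
      rw [map_sum]
      conv_rhs => rw [← hP x hxS, ← sub_zero (Finset.sum _ _), ← h1, ← Finset.sum_sub_distrib]
      refine Finset.sum_congr rfl fun i _ ↦ ?_
      rw [← Module.End.mul_apply, mul_geom_sum]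
      rfl
  · simp only [periodic, hn, if_false, Nat.even_add_one, not_false_eq_true, if_true] at hx ⊢
    refine ⟨P x, hPS x hxS, ?_⟩
    rw [LinearMap.sub_apply, Module.End.one_apply, sub_eq_zero] at hx
    have hfix : ∀ i, (g ^ i) x = x := fun i ↦ by
      induction i with
      | zero => simp
      | succ i ih => rw [pow_succ', Module.End.mul_apply, ih, hx]
    conv_rhs => rw [← hP x hxS]
    simp only [hfix, LinearMap.sum_apply]

end Period

lemma map_pow (f : α → α) (i : ℕ) : (map f : Module.End F (ListChain F α)) ^ i = map f^[i] := by
  induction i with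
  | zero => ext1 l; ext1; simp
  | succ i ih =>
    refine LinearMap.ext fun c ↦ ?_
    rw [pow_succ, Module.End.mul_apply, ih, map_map, Function.iterate_succ]

lemma bdry_periodic {p : ℕ} (f : α → α) (n : ℕ) (c : ListChain F α) :
    bdry (periodic p (map f) n c) = periodic p (map f) n (bdry c) :=
  periodic_comm (F := F) (g := map f) (g' := map f) (S := ⊤) (T := bdry) (fun _ _ ↦ trivial)
    (fun x _ ↦ bdry_map f x) n trivial

lemma coeffSum_periodic {p : ℕ} (hp : (p : F) = 0) (f : α → α) (n : ℕ) (c : ListChain F α) :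
    coeffSum (periodic p (map f) n c) = 0 := by
  by_cases hn : Even n
  · simp [periodic, hn, map_pow, coeffSum_map, hp]
  · simp [periodic, hn, coeffSum_map]

section Fill

variable {E : Type*} [SeminormedAddCommGroup E] [NormedSpace ℝ E]

/-- Lists of length `n` of points of `A` at mutual distance less than `δ`. -/
def small (A : Set E) (n : ℕ) (δ : ℝ) : Set (List E) :=
  {l | l.length = n ∧ (∀ x ∈ l, x ∈ A) ∧ ∀ x ∈ l, ∀ y ∈ l, dist x y < δ}

/-- Small cycles are boundaries of small chains in a cone. -/
lemma exists_bdry_eq_of_cone {A B : Set E} {v : E} {K : ℝ} (hK : ∀ x ∈ A, dist x v ≤ K)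
    (hAB : ∀ x ∈ A, ∀ s ∈ Set.Icc (0 : ℝ) 1, AffineMap.lineMap x v s ∈ B)
    {n : ℕ} {δ δ' : ℝ} (hδ : δ < δ') {z : ListChain F E} (hz : z ∈ on F (small A n δ))
    (hbz : bdry z = 0) (hsum : coeffSum z = 0) :
    ∃ c ∈ on F (small B (n + 1) δ'), bdry c = z := by
  obtain ⟨m, hm⟩ := exists_nat_gt (K / (δ' - δ))
  obtain ⟨m, hm0, hm⟩ : ∃ m : ℕ, 0 < m ∧ K / m < δ' - δ := by
    refine ⟨m + 1, by omega, ?_⟩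
    have h1 : 0 < δ' - δ := sub_pos.mpr hδ
    rw [div_lt_iff₀ h1] at hm
    rw [div_lt_iff₀ (by positivity)]
    push_cast
    nlinarith
  have hm0' : (0 : ℝ) < m := by exact_mod_cast hm0
  set h : ℕ → E → E := fun i x ↦ AffineMap.lineMap x v ((i : ℝ) / m) with hh
  refine ⟨-∑ i ∈ Finset.range m, prism (h i) (h (i + 1)) z, ?_, ?_⟩
  · refine Submodule.neg_mem _ (Submodule.sum_mem _ fun i hi ↦ ?_)
    rw [Finset.mem_range] at hi
    refine prism_mem_on _ _ (fun l hl ↦ hl.1) ?_ hz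
    intro l hl s hs hsl
    refine ⟨hs, ?_, ?_⟩
    · intro b hb
      obtain ⟨a, ha, rfl | rfl⟩ := hsl b hb
      · refine hAB a (hl.2.1 a ha) _ ⟨by positivity, ?_⟩
        rw [div_le_one hm0']
        exact_mod_cast hi.le
      · refine hAB a (hl.2.1 a ha) _ ⟨by positivity, ?_⟩
        rw [div_le_one hm0']
        exact_mod_cast hi
    · have key : ∀ j k : ℕ, (j = i ∨ j = i + 1) → (k = i ∨ k = i + 1) → ∀ a ∈ l, ∀ b ∈ l,
          dist (h j a) (h k b) < δ' := by
        intro j k hj hk a ha b hb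
        have h1 : dist (h j a) (h j b) ≤ dist a b := by
          have : dist (h j a) (h j b) = |1 - (j : ℝ) / m| * dist a b := by
            simp only [hh, AffineMap.lineMap_apply_module, dist_eq_norm]
            rw [add_sub_add_right_eq_sub, ← smul_sub, norm_smul, Real.norm_eq_abs]
          rw [this]
          refine mul_le_of_le_one_left dist_nonneg ?_
          have h2 : (j : ℝ) / m ≤ 1 := by
            rw [div_le_one hm0']
            norm_cast
            omega
          have h3 : 0 ≤ (j : ℝ) / m := by positivity
          rw [abs_le]
          constructor <;> linarith
        have h2 : dist (h j b) (h k b) ≤ K / m := by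
          have : dist (h j b) (h k b) = |(j : ℝ) - k| / m * dist b v := by
            simp only [hh]
            rw [dist_lineMap_lineMap, Real.dist_eq, ← sub_div, abs_div, abs_of_pos hm0']
          rw [this]
          have h4 : |(j : ℝ) - k| ≤ 1 := by
            rcases hj with rfl | rfl <;> rcases hk with rfl | rfl <;> simp
          have h5 : |(j : ℝ) - k| * dist b v ≤ 1 * K :=
            mul_le_mul h4 (hK b (hl.2.1 b hb)) dist_nonneg zero_le_one
          rw [div_mul_eq_mul_div]
          gcongr
          linarith
        have h3 := hl.2.2 a ha b hb
        linarith [dist_triangle (h j a) (h j b) (h k b)]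
      intro x hx y hy
      obtain ⟨a, ha, rfl | rfl⟩ := hsl x hx <;> obtain ⟨b, hb, rfl | rfl⟩ := hsl y hy <;>
        exact key _ _ (by simp) (by simp) a ha b hb
  · rw [map_neg, map_sum]
    have h0 : map (h 0) z = z := by
      have : h 0 = id := by ext x; simp [hh]
      rw [this, map_id]
    have h1 : map (h m) z = 0 := by
      have : h m = fun _ ↦ v := by ext x; simp [hh, hm0.ne']
      rw [this, map_const (n := n) v (Finsupp.supported_mono (fun l hl ↦ hl.1) hz), hsum, zero_smul]
    simp only [bdry_prism, hbz, map_zero, sub_zero]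
    rw [Finset.sum_range_sub (fun i ↦ map (h i) z), h0, h1]
    simp

/-- Successive small fillings of the cycles of the periodic resolution. -/
lemma exists_resolution {p : ℕ} (hp : (p : F) = 0) {g : E → E} (hg : g^[p] = id)
    (hgi : Isometry g) {A : ℕ → Set E} {v : ℕ → E} (hAg : ∀ n, ∀ x ∈ A n, g x ∈ A n)
    (hv : v 0 ∈ A 0) (hb : ∀ n, Bornology.IsBounded (A n))
    (hA : ∀ n, ∀ x ∈ A n, ∀ s ∈ Set.Icc (0 : ℝ) 1, AffineMap.lineMap x (v (n + 1)) s ∈ A (n + 1))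
    {δ : ℝ} (hδ : 0 < δ) :
    ∃ c : ℕ → ListChain F E, c 0 = of [v 0] ∧ (∀ n, c n ∈ on F (small (A n) (n + 1) δ)) ∧
      ∀ n, bdry (c (n + 1)) = periodic p (map g) n (c n) := by
  have hgp : (map g : Module.End F (ListChain F E)) ^ p = 1 := by
    rw [map_pow, hg]
    exact LinearMap.ext map_id
  have hsm : ∀ n (δ : ℝ), ∀ c ∈ on F (small (A n) (n + 1) δ),
      map g c ∈ on F (small (A n) (n + 1) δ) := fun n δ c hc ↦ by
    refine map_mem_on ?_ hc
    rintro l ⟨h1, h2, h3⟩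
    simp only [small, Set.mem_ofPred_eq, List.length_map, List.mem_map, forall_exists_index,
      and_imp, forall_apply_eq_imp_iff₂, hgi.dist_eq]
    exact ⟨h1, fun x hx ↦ hAg n x (h2 x hx), h3⟩
  set η : ℕ → ℝ := fun n ↦ δ * (1 - 1 / (n + 2)) with hη
  have hηlt : ∀ n, η n < η (n + 1) := fun n ↦ by
    simp only [hη]
    gcongr
    simp
  have hηδ : ∀ n, η n ≤ δ := fun n ↦ by
    have : (0 : ℝ) < 1 / (n + 2) := by positivity
    simp only [hη]
    nlinarith
  let Q : ℕ → ListChain F E → Prop := fun n c ↦ c ∈ on F (small (A n) (n + 1) (η n)) ∧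
    bdry (periodic p (map g) n c) = 0
  have step : ∀ n (c : {c // Q n c}), ∃ c' : {c // Q (n + 1) c},
      bdry c'.1 = periodic p (map g) n c.1 := by
    rintro n ⟨c, hc, hc'⟩
    obtain ⟨K, hK⟩ := (hb n).exists_norm_le
    obtain ⟨c', h1, h2⟩ := exists_bdry_eq_of_cone (K := K + ‖v (n + 1)‖)
      (fun x hx ↦ (dist_le_norm_add_norm _ _).trans (by linarith [hK x hx])) (hA n) (hηlt n)
      (periodic_mem (hsm n _) n hc) hc' (coeffSum_periodic hp g n c)
    refine ⟨⟨c', h1, ?_⟩, h2⟩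
    rw [bdry_periodic, h2, periodic_succ_periodic hgp]
  choose f hf using step
  have h0 : Q 0 (of [v 0]) := by
    refine ⟨of_mem_on ?_, ?_⟩
    · have : 0 < δ * (1 - 2⁻¹) := by linarith
      simpa [small, hη, hv] using this
    · rw [bdry_periodic, bdry_of_cons]
      simp [periodic, map_pow, Finsupp.smul_single, hp]
  let c : ∀ n, {c // Q n c} := fun n ↦ Nat.rec ⟨of [v 0], h0⟩ f n
  refine ⟨fun n ↦ (c n).1, rfl, fun n ↦ ?_, fun n ↦ hf n (c n)⟩
  refine Finsupp.supported_mono ?_ (c n).2.1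
  rintro l ⟨h1, h2, h3⟩
  exact ⟨h1, h2, fun x hx y hy ↦ (h3 x hx y hy).trans_le (hηδ n)⟩

end Fill

section Sorting

variable {G L : Type*} [LinearOrder L]

/-- Signed insertion of `a` into a list sorted by the second component. -/
noncomputable def insList (a : G × L) : List (G × L) → ListChain F (G × L)
  | [] => of [a]
  | b :: l => if a.2 < b.2 then of (a :: b :: l) else if a.2 = b.2 then 0 else
      -cons b (insList a l)

/-- The linear extension of signed insertion. -/
noncomputable def ins (a : G × L) : ListChain F (G × L) →ₗ[F] ListChain F (G × L) :=
  ext (insList a)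

/-- Sort a list by the second component, with sign; lists with a repeated second component
are sent to zero. -/
noncomputable def sortList : List (G × L) → ListChain F (G × L)
  | [] => of []
  | a :: l => ins a (sortList l)

/-- The linear extension of signed sorting. -/
noncomputable def sort : ListChain F (G × L) →ₗ[F] ListChain F (G × L) := ext sortList

/-- Lists strictly sorted by the second component. -/
def sorted (G L : Type*) [LinearOrder L] : Set (List (G × L)) :=
  {l | l.Pairwise fun a b ↦ a.2 < b.2}

lemma ins_cons_of_lt {a b : G × L} (h : a.2 < b.2) (c : ListChain F (G × L)) :
    ins a (cons b c) = cons a (cons b c) := by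
  have : (ins a ∘ₗ cons b : ListChain F (G × L) →ₗ[F] _) = cons a ∘ₗ cons b :=
    linearMap_ext fun l ↦ by simp [ins, insList, h]
  exact LinearMap.congr_fun this c

lemma ins_cons_of_eq {a b : G × L} (h : a.2 = b.2) (c : ListChain F (G × L)) :
    ins a (cons b c) = 0 := by
  have : (ins a ∘ₗ cons b : ListChain F (G × L) →ₗ[F] _) = 0 :=
    linearMap_ext fun l ↦ by simp [ins, insList, h]
  exact LinearMap.congr_fun this c

lemma ins_cons_of_gt {a b : G × L} (h : b.2 < a.2) (c : ListChain F (G × L)) :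
    ins a (cons b c) = -cons b (ins a c) := by
  have : (ins a ∘ₗ cons b : ListChain F (G × L) →ₗ[F] _) =
      -((cons b : ListChain F (G × L) →ₗ[F] _) ∘ₗ ins a) :=
    linearMap_ext fun l ↦ by simp [ins, insList, h.not_gt, h.ne']
  exact LinearMap.congr_fun this c

lemma ins_eq_cons {a : G × L} {c : ListChain F (G × L)}
    (hc : c ∈ on F {l : List (G × L) | ∀ b ∈ l, a.2 < b.2}) : ins a c = cons a c := by
  refine eqOn_of_mem_on _ _ (fun l hl ↦ ?_) hc
  cases l with
  | nil => simp [ins, insList]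
  | cons b l =>
    have := hl b (by simp)
    simp [ins, insList, this]

lemma bdry_mem_on_subset (l : List α) :
    bdry (of l : ListChain F α) ∈ on F {s : List α | s ⊆ l} := by
  induction l with
  | nil => simp
  | cons a l ih =>
    rw [bdry_of_cons]
    exact Submodule.sub_mem _ (of_mem_on (by simp))
      (cons_mem_on (fun s hs ↦ List.cons_subset_cons a hs) ih)

lemma bdry_ins {a : G × L} {l : List (G × L)} (hl : l ∈ sorted G L)
    (ha : ∀ b ∈ l, a.2 = b.2 → a = b) :
    bdry (ins a (of l) : ListChain F (G × L)) = of l - ins a (bdry (of l)) := by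
  induction l with
  | nil => simp [ins, insList, bdry_of_cons]
  | cons b l ih =>
    obtain ⟨hb, hl⟩ := List.pairwise_cons.mp hl
    rcases lt_trichotomy a.2 b.2 with h | h | h
    · rw [← cons_of, ins_cons_of_lt h, bdry_cons, cons_of, ← ins_eq_cons]
      refine Finsupp.supported_mono ?_ (bdry_mem_on_subset (b :: l))
      intro s hs x hx
      rcases List.mem_cons.mp (hs hx) with rfl | h'
      · exact h
      · exact h.trans (hb x h')
    · obtain rfl := ha b (by simp) h
      rw [← cons_of, ins_cons_of_eq rfl, bdry_cons, map_sub (ins (F := F) a),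
        ins_cons_of_eq rfl, ins_eq_cons (of_mem_on hb), map_zero]
      simp
    · rw [← cons_of, ins_cons_of_gt h, map_neg, bdry_cons, bdry_cons,
        ih hl fun x hx ↦ ha x (by simp [hx])]
      simp only [map_sub, ins_cons_of_gt h]
      abel

lemma ins_of_mem_on (a : G × L) {l : List (G × L)} (hl : l ∈ sorted G L) :
    (ins a (of l) : ListChain F (G × L)) ∈ on F
      {s : List (G × L) | s ∈ sorted G L ∧ s.length = l.length + 1 ∧ s ⊆ a :: l} := by
  induction l with
  | nil => exact by simpa [ins, insList] using of_mem_on (by simp [sorted])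
  | cons b l ih =>
    have hl' := hl
    obtain ⟨hb, hl⟩ := List.pairwise_cons.mp hl
    rcases lt_trichotomy a.2 b.2 with h | h | h
    · rw [← cons_of, ins_cons_of_lt h, cons_of, cons_of]
      refine of_mem_on ⟨List.pairwise_cons.mpr ⟨?_, hl'⟩, rfl, fun _ h ↦ h⟩
      intro x hx
      rcases List.mem_cons.mp hx with rfl | h'
      · exact h
      · exact h.trans (hb x h')
    · rw [← cons_of, ins_cons_of_eq h]
      exact Submodule.zero_mem _
    · rw [← cons_of, ins_cons_of_gt h]
      refine Submodule.neg_mem _ (cons_mem_on ?_ (ih hl))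
      rintro s ⟨h1, h2, h3⟩
      refine ⟨List.pairwise_cons.mpr ⟨fun x hx ↦ ?_, h1⟩, by simp [h2], fun x hx ↦ ?_⟩
      · rcases List.mem_cons.mp (h3 hx) with rfl | h'
        · exact h
        · exact hb x h'
      · rcases List.mem_cons.mp hx with rfl | hx
        · simp
        · have := h3 hx
          simp only [List.mem_cons] at this ⊢
          tauto

lemma sort_of_cons (a : G × L) (l : List (G × L)) :
    sort (of (a :: l) : ListChain F (G × L)) = ins a (sort (of l)) := by
  simp [sort, sortList]

lemma sort_cons (a : G × L) (c : ListChain F (G × L)) : sort (cons a c) = ins a (sort c) := by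
  have : (sort ∘ₗ cons a : ListChain F (G × L) →ₗ[F] _) = ins a ∘ₗ sort :=
    linearMap_ext fun l ↦ by simp [sort_of_cons]
  exact LinearMap.congr_fun this c

lemma sort_of_mem_on (l : List (G × L)) : (sort (of l) : ListChain F (G × L)) ∈ on F
    {s : List (G × L) | s ∈ sorted G L ∧ s.length = l.length ∧ s ⊆ l} := by
  induction l with
  | nil => simpa [sort, sortList] using of_mem_on (by simp [sorted])
  | cons a l ih =>
    rw [sort_of_cons]
    refine apply_mem_of_mem_on _ (fun s hs ↦ ?_) ih
    refine Finsupp.supported_mono ?_ (ins_of_mem_on a hs.1)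
    rintro s' ⟨h1, h2, h3⟩
    exact ⟨h1, by simp [h2, hs.2.1], fun _ hx ↦ List.cons_subset_cons a hs.2.2 (h3 hx)⟩

/-- Lists in which the second component determines the first. -/
def consistent (G L : Type*) : Set (List (G × L)) := {l | ∀ a ∈ l, ∀ b ∈ l, a.2 = b.2 → a = b}

lemma bdry_sort {c : ListChain F (G × L)} (hc : c ∈ on F (consistent G L)) :
    bdry (sort c) = sort (bdry c) := by
  refine eqOn_of_mem_on ((bdry : ListChain F (G × L) →ₗ[F] _) ∘ₗ sort)
    ((sort : ListChain F (G × L) →ₗ[F] _) ∘ₗ bdry) (fun l hl ↦ ?_) hc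
  simp only [LinearMap.comp_apply]
  induction l with
  | nil => simp [sort, sortList]
  | cons a l ih =>
    rw [sort_of_cons, bdry_of_cons, map_sub, sort_cons,
      ← ih fun x hx y hy ↦ hl x (by simp [hx]) y (by simp [hy])]
    refine eqOn_of_mem_on ((bdry : ListChain F (G × L) →ₗ[F] _) ∘ₗ ins a)
      (LinearMap.id - (ins a : ListChain F (G × L) →ₗ[F] _) ∘ₗ bdry) (fun s hs ↦ ?_)
      (sort_of_mem_on l)
    exact bdry_ins hs.1 fun b hb ↦ hl a (by simp) b (by simp [hs.2.2 hb])

lemma sort_map {f : G → G} (c : ListChain F (G × L)) :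
    sort (map (Prod.map f id) c) = map (Prod.map f id) (sort c) := by
  have hins : ∀ (a : G × L) (c : ListChain F (G × L)),
      ins (Prod.map f id a) (map (Prod.map f id) c) = map (Prod.map f id) (ins a c) := by
    intro a c
    have : (ins (Prod.map f id a) ∘ₗ map (Prod.map f id) : ListChain F (G × L) →ₗ[F] _) =
        map (Prod.map f id) ∘ₗ ins a := by
      refine linearMap_ext fun l ↦ ?_
      simp only [LinearMap.comp_apply]
      induction l with
      | nil => simp [ins, insList]
      | cons b l ih =>
        rw [← cons_of, map_cons]
        rcases lt_trichotomy a.2 b.2 with h | h | h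
        · rw [ins_cons_of_lt h, map_cons, map_cons,
            ins_cons_of_lt (a := Prod.map f id a) (b := Prod.map f id b) h]
        · rw [ins_cons_of_eq h, map_zero,
            ins_cons_of_eq (a := Prod.map f id a) (b := Prod.map f id b) h]
        · rw [ins_cons_of_gt h, map_neg, map_cons, ← ih,
            ins_cons_of_gt (a := Prod.map f id a) (b := Prod.map f id b) h]
    exact LinearMap.congr_fun this c
  have : (sort ∘ₗ map (Prod.map f id) : ListChain F (G × L) →ₗ[F] _) =
      map (Prod.map f id) ∘ₗ sort := by
    refine linearMap_ext fun l ↦ ?_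
    simp only [LinearMap.comp_apply]
    induction l with
    | nil => simp [sort, sortList]
    | cons b l ih => rw [← cons_of, map_cons, sort_cons, sort_cons, ih, hins]
  exact LinearMap.congr_fun this c

lemma on_sorted_eq_zero {M : ℕ} {c : ListChain F (G × Fin M)}
    (hc : c ∈ on F {l : List (G × Fin M) | l ∈ sorted G (Fin M) ∧ l.length = M + 1}) : c = 0 := by
  have : {l : List (G × Fin M) | l ∈ sorted G (Fin M) ∧ l.length = M + 1} = ∅ := by
    refine Set.eq_empty_of_forall_notMem fun l ⟨h1, h2⟩ ↦ ?_
    have h3 : (l.map Prod.snd).Nodup := by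
      rw [List.nodup_iff_pairwise_ne, List.pairwise_map]
      exact List.Pairwise.imp (fun h ↦ h.ne) h1
    have := h3.length_le_card
    simp [h2] at this
  rwa [this, on, Finsupp.supported_empty, Submodule.mem_bot] at hc

end Sorting

section Genus

variable {p : ℕ} [Fact p.Prime] {L : Type*}

lemma iterate_shift (i : ℕ) (a : ZMod p × L) :
    (Prod.map (· + 1) id)^[i] a = (a.1 + i, a.2) := by
  induction i with
  | zero => simp
  | succ i ih => rw [Function.iterate_succ_apply', ih]; simp [add_assoc]

/-- The restriction to lists starting with a label of the form `(0, q)`. -/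
noncomputable def headZero : List (ZMod p × L) → ListChain F (ZMod p × L)
  | [] => 0
  | a :: l => if a.1 = 0 then of (a :: l) else 0

lemma sum_shift_headZero {l : List (ZMod p × L)} (hl : l ≠ []) :
    ∑ i ∈ Finset.range p, map (F := F) (Prod.map (· + 1) id)^[i]
      (ext headZero (map (Prod.map (· + 1) id)^[p - i] (of l : ListChain F (ZMod p × L)))) =
    of l := by
  cases l with
  | nil => simp at hl
  | cons a l =>
    have hcast : ((p - a.1.val : ℕ) : ZMod p) = -a.1 := by
      rw [Nat.cast_sub (ZMod.val_lt _).le]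
      simp
    simp only [map_of, ext_of, headZero, List.map_cons, iterate_shift]
    rw [Finset.sum_eq_single a.1.val]
    · rw [if_pos (by rw [hcast, add_neg_cancel]), map_of]
      simp only [List.map_cons, List.map_map, iterate_shift, hcast]
      congr 2
      · simp
      · conv_rhs => rw [← List.map_id l]
        refine List.map_congr_left fun b _ ↦ ?_
        simp [hcast, Prod.map]
    · intro i hi hia
      rw [if_neg, map_zero]
      intro h
      apply hia
      have hi := Finset.mem_range.mp hi
      rw [Nat.cast_sub hi.le, CharP.cast_eq_zero, zero_sub, ← sub_eq_add_neg, sub_eq_zero] at h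
      rw [h, ZMod.val_natCast, Nat.mod_eq_of_lt hi]
    · intro h
      exact absurd (Finset.mem_range.mpr (ZMod.val_lt _)) h

/-- The chains of nonempty lists of labels in `ZMod p × L` form an induced module. -/
lemma exists_periodic_eq_of_shift (m : ℕ) (n : ℕ) {x : ListChain F (ZMod p × L)}
    (hx : x ∈ on F {l : List (ZMod p × L) | l.length = m + 1})
    (h : periodic p (map (Prod.map (· + 1) id)) n x = 0) :
    ∃ y ∈ on F {l : List (ZMod p × L) | l.length = m + 1},
      periodic p (map (Prod.map (· + 1) id)) (n + 1) y = x := by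
  have hg : (map (Prod.map (· + 1) id) : Module.End F (ListChain F (ZMod p × L))) ^ p = 1 := by
    rw [map_pow]
    have : (Prod.map (· + 1) id : ZMod p × L → ZMod p × L)^[p] = id := by
      ext1 a
      simp [iterate_shift]
    rw [this]
    exact LinearMap.ext map_id
  have hS : ∀ x ∈ on F {l : List (ZMod p × L) | l.length = m + 1},
      map (Prod.map (· + 1) id) x ∈ on F {l : List (ZMod p × L) | l.length = m + 1} :=
    fun x hx ↦ map_mem_on (fun l hl ↦ by simpa using hl) hx
  have hPS : ∀ x ∈ on F {l : List (ZMod p × L) | l.length = m + 1},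
      ext headZero x ∈ on F {l : List (ZMod p × L) | l.length = m + 1} := by
    refine fun x hx ↦ apply_mem_of_mem_on _ (fun l hl ↦ ?_) hx
    rw [ext_of]
    cases l with
    | nil => simp at hl
    | cons a l =>
      rw [headZero]
      split_ifs
      · exact of_mem_on hl
      · exact Submodule.zero_mem _
  refine exists_periodic_eq hg hS hPS (fun x hx ↦ ?_) n hx h
  have := eqOn_of_mem_on (∑ i ∈ Finset.range p, map (Prod.map (· + 1) id)^[i] ∘ₗ ext headZero ∘ₗ
    map (Prod.map (· + 1) id)^[p - i] : ListChain F (ZMod p × L) →ₗ[F] ListChain F (ZMod p × L))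
    LinearMap.id (fun l hl ↦ ?_) hx
  · simp only [map_pow]
    simpa only [LinearMap.sum_apply, LinearMap.comp_apply, LinearMap.id_apply] using this
  · simp only [LinearMap.sum_apply, LinearMap.comp_apply, LinearMap.id_apply]
    exact sum_shift_headZero (by rintro rfl; simp at hl)

/-- A `ℤ/p`-space built from `M + 1` successive cones has no locally consistent
equivariant labelling by `ℤ/p × Fin M`. -/
theorem no_labelling {E : Type*} [SeminormedAddCommGroup E] [NormedSpace ℝ E]
    {g : E → E} (hg : g^[p] = id) (hgi : Isometry g) {A : ℕ → Set E} {v : ℕ → E}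
    (hAg : ∀ n, ∀ x ∈ A n, g x ∈ A n) (hv : v 0 ∈ A 0) (hb : ∀ n, Bornology.IsBounded (A n))
    (hA : ∀ n, ∀ x ∈ A n, ∀ s ∈ Set.Icc (0 : ℝ) 1, AffineMap.lineMap x (v (n + 1)) s ∈ A (n + 1))
    {M : ℕ} (κ : E → ZMod p) (lev : E → Fin M) {δ : ℝ} (hδ : 0 < δ)
    (hκ : ∀ x ∈ A M, κ (g x) = κ x + 1) (hlev : ∀ x ∈ A M, lev (g x) = lev x)
    (hloc : ∀ x ∈ A M, ∀ y ∈ A M, dist x y < δ → lev x = lev y → κ x = κ y) : False := by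
  have hpF : ((p : ℕ) : ZMod p) = 0 := CharP.cast_eq_zero _ _
  obtain ⟨c, hc0, hc, hbc⟩ := exists_resolution (F := ZMod p) hpF hg hgi hAg hv hb hA hδ
  have hmono : Monotone A := monotone_nat_of_le_succ fun n x hx ↦ by
    simpa using hA n x hx 0 (by simp)
  set lab : E → ZMod p × Fin M := fun x ↦ (κ x, lev x) with hlab
  set σ : ZMod p × Fin M → ZMod p × Fin M := Prod.map (· + 1) id with hσ
  set d : ℕ → ListChain (ZMod p) (ZMod p × Fin M) := fun n ↦ sort (map lab (c n)) with hd
  have hdl : ∀ n, d n ∈ on (ZMod p) {l : List (ZMod p × Fin M) |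
      l ∈ sorted (ZMod p) (Fin M) ∧ l.length = n + 1} := fun n ↦ by
    refine apply_mem_of_mem_on (sort ∘ₗ map lab) (fun l hl ↦ ?_) (hc n)
    rw [LinearMap.comp_apply, map_of]
    refine Finsupp.supported_mono ?_ (sort_of_mem_on _)
    rintro s ⟨h1, h2, -⟩
    exact ⟨h1, by simp [h2, hl.1]⟩
  have hdb : ∀ n, n + 1 ≤ M → bdry (d (n + 1)) = periodic p (map σ) n (d n) := fun n hn ↦ by
    simp only [hd]
    rw [bdry_sort, bdry_map, hbc]
    · refine periodic_comm (S := on (ZMod p) {l : List E | ∀ x ∈ l, x ∈ A M})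
        (T := sort ∘ₗ map lab) (fun x hx ↦ ?_) (fun x hx ↦ ?_) n ?_
      · refine map_mem_on (fun l hl ↦ ?_) hx
        simp only [Set.mem_ofPred_eq, List.mem_map, forall_exists_index, and_imp,
          forall_apply_eq_imp_iff₂]
        exact fun x hx ↦ hAg M x (hl x hx)
      · rw [LinearMap.comp_apply, LinearMap.comp_apply, hσ, ← sort_map, ← hσ]
        congr 1
        refine eqOn_of_mem_on (map lab ∘ₗ map g) (map σ ∘ₗ map lab) (fun l hl ↦ ?_) hx
        simp only [LinearMap.comp_apply, map_of, List.map_map]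
        congr 1
        refine List.map_congr_left fun y hy ↦ ?_
        simp [hlab, hσ, hκ y (hl y hy), hlev y (hl y hy)]
      · refine Finsupp.supported_mono ?_ (hc n)
        exact fun l hl x hx ↦ hmono (Nat.le_of_succ_le hn) (hl.2.1 x hx)
    · refine map_mem_on (fun l hl ↦ ?_) (hc (n + 1))
      simp only [consistent, Set.mem_ofPred_eq, List.mem_map, forall_exists_index, and_imp,
          forall_apply_eq_imp_iff₂]
      intro x hx y hy h
      exact Prod.ext (hloc x (hmono hn (hl.2.1 x hx)) y (hmono hn (hl.2.1 y hy))
        (hl.2.2 x hx y hy) h) h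
  have key : ∀ j ≤ M, ∃ x, ∃ y ∈ on (ZMod p) {l : List (ZMod p × Fin M) | l.length = M - j + 1},
      d (M - j) = bdry x + periodic p (map σ) (M - j + 1) y := by
    intro j
    induction j with
    | zero =>
      intro _
      refine ⟨0, 0, Submodule.zero_mem _, ?_⟩
      rw [Nat.sub_zero, on_sorted_eq_zero (hdl M)]
      simp
    | succ j ih =>
      intro hj
      obtain ⟨x, y, hy, h⟩ := ih (by omega)
      obtain ⟨n, hn⟩ : ∃ n, n = M - (j + 1) := ⟨_, rfl⟩
      rw [show M - j = n + 1 by omega] at h hy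
      rw [← hn]
      have h2 : periodic p (map σ) n (d n - bdry y) = 0 := by
        rw [map_sub, ← hdb n (by omega), h, map_add, bdry_bdry, zero_add, sub_eq_zero,
          periodic_add_two, bdry_periodic]
      obtain ⟨y', hy', h3⟩ := exists_periodic_eq_of_shift n n
        (Submodule.sub_mem _ (Finsupp.supported_mono (fun l hl ↦ hl.2) (hdl n))
          (bdry_mem_on_length hy)) h2
      exact ⟨y, y', hy', by rw [h3]; abel⟩
  obtain ⟨x, y, hy, h⟩ := key M le_rfl
  rw [Nat.sub_self] at h
  have h1 : coeffSum (bdry (d 0)) = 0 := by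
    rw [h, map_add, bdry_bdry, zero_add, bdry_periodic, coeffSum_periodic hpF]
  have h2 : d 0 = of [lab (v 0)] := by
    simp [hd, hc0, sort, sortList, ins, insList]
  rw [h2] at h1
  simp [bdry_of_cons, coeffSum] at h1

end Genus

end ListChain

/-- A self-map of prime order `p` admits a `ZMod p`-valued coordinate on its non-fixed points. -/
theorem exists_equivariant_choice {p : ℕ} [Fact p.Prime] {P : Type*} {f : P → P}
    (hf : f^[p] = id) : ∃ s : P → ZMod p, ∀ a, f a ≠ a → s (f a) = s a + 1 := by
  have hp : 0 < p := (Fact.out : p.Prime).pos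
  let O : P → Set P := fun a => {b | ∃ i, f^[i] a = b}
  have hO : ∀ a, O (f a) = O a := by
    intro a
    ext b
    constructor
    · rintro ⟨i, rfl⟩
      exact ⟨i + 1, rfl⟩
    · rintro ⟨i, rfl⟩
      refine ⟨i + (p - 1), ?_⟩
      rw [← Function.iterate_succ_apply, show (i + (p - 1)).succ = i + p by omega,
        Function.iterate_add_apply, hf, id]
  have hself : ∀ a, a ∈ O a := fun a => ⟨0, rfl⟩
  rcases isEmpty_or_nonempty P with h | h
  · exact ⟨fun _ => 0, fun a => (h.false a).elim⟩
  have hrep : ∀ a, ∃ i, f^[i] (Classical.epsilon (· ∈ O a)) = a := by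
    intro a
    obtain ⟨j, hj⟩ : Classical.epsilon (· ∈ O a) ∈ O a :=
      Classical.epsilon_spec (p := (· ∈ O a)) ⟨a, hself a⟩
    refine ⟨p * j - j, ?_⟩
    rw [← hj, ← Function.iterate_add_apply,
      Nat.sub_add_cancel (Nat.le_mul_of_pos_left j hp), Function.iterate_mul, hf,
      Function.iterate_id, id]
  choose i hi using hrep
  refine ⟨fun a => i a, fun a ha => ?_⟩
  have h1 := hi (f a)
  have h2 := hi a
  rw [hO] at h1
  set b := Classical.epsilon (· ∈ O a)
  have hb : f b ≠ b := by
    intro hb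
    rw [Function.iterate_fixed hb] at h2
    exact ha (h2 ▸ hb)
  have hm : Function.minimalPeriod f b = p :=
    Function.minimalPeriod_eq_prime (by simp [Function.IsPeriodicPt, hf, Function.IsFixedPt]) hb
  have h3 : f^[i (f a)] b = f^[i a + 1] b := by rw [h1, Function.iterate_succ_apply', h2]
  have h4 : (i (f a) : ZMod p) = ((i a + 1 : ℕ) : ZMod p) := by
    rw [ZMod.natCast_eq_natCast_iff']
    rw [← Function.iterate_mod_minimalPeriod_eq (n := i (f a)),
      ← Function.iterate_mod_minimalPeriod_eq (n := i a + 1), hm] at h3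
    exact (Function.iterate_eq_iterate_iff_of_lt_minimalPeriod (hm.symm ▸ Nat.mod_lt _ hp)
      (hm.symm ▸ Nat.mod_lt _ hp)).1 h3
  simpa using h4

/-- A labelling of `U` with `m` levels: on the `g`-invariant set `U`, a locally constant equivariant
map into `m` disjoint copies of `ZMod p`. -/
def HasLabelling {E : Type*} [PseudoMetricSpace E] (p : ℕ) (g : E → E) (U : Set E) (m : ℕ) :
    Prop :=
  (∀ x, g x ∈ U ↔ x ∈ U) ∧ ∃ (κ : E → ZMod p) (lev : E → ℕ) (δ : ℝ), 0 < δ ∧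
    (∀ x ∈ U, κ (g x) = κ x + 1 ∧ lev (g x) = lev x ∧ lev x < m) ∧
    ∀ x ∈ U, ∀ y ∈ U, dist x y < δ → lev x = lev y → κ x = κ y

namespace HasLabelling

variable {E : Type*} [PseudoMetricSpace E] {p : ℕ} {g : E → E}

theorem union {U V : Set E} {a b : ℕ} (hU : HasLabelling p g U a) (hV : HasLabelling p g V b) :
    HasLabelling p g (U ∪ V) (a + b) := by
  classical
  obtain ⟨hU, κ, lev, δ, hδ, h1, h2⟩ := hU
  obtain ⟨hV, κ', lev', δ', hδ', h1', h2'⟩ := hV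
  refine ⟨fun x => by simp [hU, hV], fun x => if x ∈ U then κ x else κ' x,
    fun x => if x ∈ U then lev x else a + lev' x, min δ δ', lt_min hδ hδ', ?_, ?_⟩
  · intro x hx
    by_cases hxU : x ∈ U
    · have := h1 x hxU
      simp only [hU, hxU, if_true]
      exact ⟨this.1, this.2.1, by omega⟩
    · have := h1' x (hx.resolve_left hxU)
      simp only [hU, hxU, if_false]
      exact ⟨this.1, by omega, by omega⟩
  · intro x hx y hy hxy h
    rw [lt_min_iff] at hxy
    by_cases hxU : x ∈ U <;> by_cases hyU : y ∈ U <;> simp only [hxU, hyU, if_true, if_false] at h ⊢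
    · exact h2 x hxU y hyU hxy.1 h
    · have := h1 x hxU
      omega
    · have := h1 y hyU
      omega
    · exact h2' x (hx.resolve_left hxU) y (hy.resolve_left hyU) hxy.2 (by omega)

theorem empty : HasLabelling p g ∅ 0 :=
  ⟨by simp, fun _ => 0, fun _ => 0, 1, one_pos, by simp, by simp⟩

theorem iUnion {r m : ℕ} {U : Fin r → Set E} (h : ∀ i, HasLabelling p g (U i) m) :
    HasLabelling p g (⋃ i, U i) (r * m) := by
  induction r with
  | zero => simpa using empty
  | succ r ih =>
    have := (ih (U := fun i => U i.castSucc) fun i => h i.castSucc).union (h (Fin.last r))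
    convert this using 1
    · ext x
      simp [Fin.exists_fin_succ']
    · ring

end HasLabelling

/-- A monotone self-map of `ℕ` with `1 ≤ R 1` and `R m < m` has two consecutive arguments at which
its value is the first of them. -/
theorem exists_stable_scale {R : ℕ → ℕ} (hR : Monotone R) {m : ℕ} (h1 : 1 ≤ R 1) (hm : R m < m) :
    ∃ q, 1 ≤ q ∧ q + 1 ≤ m ∧ R q = q ∧ R (q + 1) = q := by
  classical
  have hex : ∃ q, R q < q := ⟨m, hm⟩
  have hq := Nat.find_spec hex
  have hmin : ∀ q, q < Nat.find hex → q ≤ R q := fun q h => not_lt.1 (Nat.find_min hex h)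
  have hle : Nat.find hex ≤ m := Nat.find_le hm
  have h0 : Nat.find hex ≠ 0 := by omega
  have hne1 : Nat.find hex ≠ 1 := by
    intro h
    rw [h] at hq
    omega
  obtain ⟨q, hqe⟩ := Nat.exists_eq_succ_of_ne_zero h0
  rw [Nat.succ_eq_add_one] at hqe
  rw [hqe] at hq hmin hle hne1
  have hq' := hmin q (by omega)
  have hmono := hR (Nat.le_succ q)
  rw [Nat.succ_eq_add_one] at hmono
  exact ⟨q, by omega, by omega, by omega, by omega⟩

/-- Equivariant multi-scale patterns whose rank cannot stay fixed produce labellings. -/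
theorem HasLabelling.of_pattern {E : Type*} [PseudoMetricSpace E] {p : ℕ} [Fact p.Prime]
    {g : E → E} {X : Set E} (hX : ∀ x, g x ∈ X ↔ x ∈ X) {P : Type*} [PartialOrder P]
    {rank : P → ℕ} (hrank : StrictMono rank) {shift : P → P} (hshift : shift^[p] = id)
    (hrs : ∀ a, rank (shift a) = rank a) {m : ℕ}
    (hfix : ∀ a, 1 ≤ rank a → rank a < m → shift a ≠ a) {pat : ℕ → E → P}
    (hpat : ∀ q x, pat q (g x) = shift (pat q x)) (hmono : ∀ x, Monotone fun q => pat q x)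
    {δ : ℝ} (hδ : 0 < δ) (hclose : ∀ x ∈ X, ∀ y ∈ X, dist x y < δ → ∀ q, pat q x ≤ pat (q + 1) y) :
    HasLabelling p g {x ∈ X | 1 ≤ rank (pat 1 x) ∧ rank (pat m x) < m} (m - 1) := by
  classical
  obtain ⟨s, hs⟩ := exists_equivariant_choice hshift
  let R : E → ℕ → ℕ := fun x q => rank (pat q x)
  have hRg : ∀ x, R (g x) = R x := fun x => funext fun q => by simp only [R, hpat, hrs]
  have hsel : ∃ sel : (ℕ → ℕ) → ℕ, ∀ x, 1 ≤ rank (pat 1 x) → rank (pat m x) < m →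
      1 ≤ sel (R x) ∧ sel (R x) + 1 ≤ m ∧ R x (sel (R x)) = sel (R x) ∧
        R x (sel (R x) + 1) = sel (R x) := by
    refine ⟨fun F => if h : ∃ q, 1 ≤ q ∧ q + 1 ≤ m ∧ F q = q ∧ F (q + 1) = q then h.choose else 0,
      fun x h1 h2 => ?_⟩
    have h := exists_stable_scale (R := R x) (hrank.monotone.comp (hmono x)) h1 h2
    simp only [dif_pos h]
    exact h.choose_spec
  obtain ⟨sel, hsel⟩ := hsel
  refine ⟨fun x => ?_, fun x => s (pat (sel (R x)) x), fun x => sel (R x) - 1, δ, hδ, ?_, ?_⟩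
  · simp only [Set.mem_ofPred_eq, hX, hpat, hrs]
  · rintro x ⟨-, h1, h2⟩
    obtain ⟨ha, hb, hc, -⟩ := hsel x h1 h2
    beta_reduce
    refine ⟨?_, by rw [hRg], by omega⟩
    rw [hRg, hpat, hs]
    refine hfix _ ?_ ?_
    · exact ha.trans_eq hc.symm
    · exact hc.trans_lt hb
  · rintro x ⟨hx, h1, h2⟩ y ⟨hy, h1', h2'⟩ hxy h
    obtain ⟨ha, -, hc, hd⟩ := hsel x h1 h2
    obtain ⟨ha', -, hc', hd'⟩ := hsel y h1' h2'
    beta_reduce at h ⊢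
    have he : sel (R y) = sel (R x) := by omega
    rw [he] at hc' hd' ha' ⊢
    set q := sel (R x)
    have hstab : ∀ z, R z q = q → R z (q + 1) = q → pat q z = pat (q + 1) z := by
      intro z hz hz'
      refine eq_of_le_of_not_lt (hmono z (Nat.le_succ q)) fun hlt => ?_
      have := hrank hlt
      exact absurd (hz.symm ▸ hz' : R z (q + 1) = R z q) this.ne'
    congr 1
    apply le_antisymm
    · rw [hstab y hc' hd']
      exact hclose x hx y hy hxy q
    · rw [hstab x hc hd]
      exact hclose y hy x hx (by rwa [dist_comm]) q

/-- A continuous equivariant family of `p` reals labels the points at which it is not nearly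
constant. -/
theorem HasLabelling.of_values {E : Type*} [PseudoMetricSpace E] {p : ℕ} [Fact p.Prime]
    {g : E → E} {X : Set E} (hX : ∀ x, g x ∈ X ↔ x ∈ X) {F : E → ZMod p → ℝ}
    (hF : ∀ x k, F (g x) k = F x (k + 1)) {η δ : ℝ} (hη : 0 < η) (hδ : 0 < δ)
    (hclose : ∀ x ∈ X, ∀ y ∈ X, dist x y < δ → ∀ k, |F x k - F y k| < η / 2) :
    HasLabelling p g {x ∈ X | ∃ k l, F x k + p * η ≤ F x l} (p - 1) := by
  classical
  let pat : ℕ → E → Finset (ZMod p) := fun q x => {k | ∀ l, F x l < F x k + q * η}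
  let shift : Finset (ZMod p) → Finset (ZMod p) := fun A => A.map (Equiv.addRight (-1 : ZMod p))
  have hmem : ∀ A k, k ∈ shift A ↔ k + 1 ∈ A := by
    intro A k
    simp [shift, Finset.mem_map_equiv]
  have hiter : ∀ (n : ℕ) A k, k ∈ shift^[n] A ↔ k + n ∈ A := by
    intro n
    induction n with
    | zero => simp
    | succ n ih =>
      intro A k
      rw [Function.iterate_succ_apply, ih, hmem]
      push_cast
      rw [add_assoc]
  have hcardp : (Finset.univ : Finset (ZMod p)).card = p := by simp
  have key := HasLabelling.of_pattern (p := p) (X := X) (g := g) hX (rank := Finset.card)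
    Finset.card_strictMono (shift := shift) (m := p) (pat := pat) (δ := δ)
    (by ext A k; simp [hiter]) (by simp [shift]) ?_ ?_ ?_ hδ ?_
  · convert key using 1
    ext x
    simp only [Set.mem_ofPred_eq]
    refine and_congr_right fun _ => ?_
    have h1 : 1 ≤ (pat 1 x).card := by
      obtain ⟨k, hk⟩ := Finite.exists_max (F x)
      refine Finset.card_pos.2 ⟨k, ?_⟩
      simp only [pat, Finset.mem_filter_univ, Nat.cast_one, one_mul]
      exact fun l => (hk l).trans_lt (lt_add_of_pos_right _ hη)
    rw [and_iff_right h1]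
    have h2 := Finset.card_lt_iff_ne_univ (pat p x)
    rw [ZMod.card] at h2
    rw [h2, Ne, Finset.eq_univ_iff_forall]
    simp [pat]
  · intro A h1 h2 h
    obtain ⟨k, hk⟩ := Finset.card_pos.1 h1
    have : A = Finset.univ := by
      refine Finset.eq_univ_iff_forall.2 fun l => ?_
      have h3 := hiter (l - k).val A k
      rw [Function.iterate_fixed h, ZMod.natCast_zmod_val, add_sub_cancel] at h3
      exact h3.1 hk
    rw [this, hcardp] at h2
    exact h2.false
  · intro q x
    ext k
    simp only [hmem, pat, Finset.mem_filter_univ, hF]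
    exact ⟨fun h l => by simpa using h (l - 1), fun h l => h (l + 1)⟩
  · intro x q q' hq k hk
    simp only [pat, Finset.mem_filter_univ] at hk ⊢
    refine fun l => (hk l).trans_le ?_
    gcongr
  · intro x hx y hy hxy q k hk
    simp only [pat, Finset.mem_filter_univ] at hk ⊢
    intro l
    have h1 := abs_lt.1 (hclose x hx y hy hxy k)
    have h2 := abs_lt.1 (hclose x hx y hy hxy l)
    have h3 := hk l
    push_cast
    linarith [h1.1, h1.2, h2.1, h2.2]

/-- The partition of the indices generated by the pairs at distance less than `ε`. -/
def proximity {ι α : Type*} [PseudoMetricSpace α] (x : ι → α) (ε : ℝ) : Setoid ι :=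
  Relation.EqvGen.setoid fun j k => dist (x j) (x k) < ε

theorem proximity_le_iff {ι α : Type*} [PseudoMetricSpace α] {x : ι → α} {ε : ℝ} {s : Setoid ι} :
    proximity x ε ≤ s ↔ ∀ j k, dist (x j) (x k) < ε → s j k :=
  ⟨fun h _ _ hjk => h (Relation.EqvGen.rel _ _ hjk), fun h => Setoid.eqvGen_le h⟩

theorem proximity_rel {ι α : Type*} [PseudoMetricSpace α] {x : ι → α} {ε : ℝ} {j k : ι}
    (h : dist (x j) (x k) < ε) : proximity x ε j k := Relation.EqvGen.rel _ _ h

theorem card_quotient_strictAnti {ι : Type*} [Finite ι] :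
    StrictAnti fun s : Setoid ι => Nat.card (Quotient s) := by
  intro s s' h
  have : Finite (Quotient s) := inferInstance
  have hs : Function.Surjective (Quotient.map (sa := s) (sb := s') id fun a b hab => h.le hab) :=
    fun b => b.inductionOn fun b => ⟨Quotient.mk _ b, rfl⟩
  refine lt_of_le_of_ne (Nat.card_le_card_of_surjective _ hs) fun he => h.not_ge fun a b hab => ?_
  have hi := ((Nat.bijective_iff_surjective_and_card _).2 ⟨hs, he.symm⟩).1
  exact Quotient.exact (hi (a₁ := Quotient.mk _ a) (a₂ := Quotient.mk _ b) (Quotient.sound hab))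

theorem HasLabelling.of_proximity {p : ℕ} [Fact p.Prime] {α : Type*} [PseudoMetricSpace α]
    {X : Set (ZMod p → α)} (hX : ∀ x, (fun k => x (k + 1)) ∈ X ↔ x ∈ X) {η : ℝ} (hη : 0 < η) :
    HasLabelling p (fun (x : ZMod p → α) k => x (k + 1))
      {x ∈ X | (∃ j k, j ≠ k ∧ dist (x j) (x k) < η) ∧ proximity x ((p - 1 : ℕ) * η) ≠ ⊤}
      (p - 2) := by
  classical
  have hp : 0 < p := (Fact.out : p.Prime).pos
  let rank : Setoid (ZMod p) → ℕ := fun s => p - Nat.card (Quotient s)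
  have hle : ∀ s : Setoid (ZMod p), Nat.card (Quotient s) ≤ p := fun s => by
    simpa using Nat.card_le_card_of_surjective (Quotient.mk s) Quotient.mk_surjective
  have hrank : StrictMono rank := fun s s' h => by
    have h1 : Nat.card (Quotient s') < Nat.card (Quotient s) := card_quotient_strictAnti h
    have := hle s
    have := hle s'
    simp only [rank]
    omega
  have hbot : rank ⊥ = 0 := by
    have : p ≤ Nat.card (Quotient (⊥ : Setoid (ZMod p))) := by
      simpa using Nat.card_le_card_of_injective (Quotient.mk (⊥ : Setoid (ZMod p)))
        fun a b h => Quotient.exact h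
    simp only [rank]
    omega
  have htop : rank ⊤ = p - 1 := by
    have : Subsingleton (Quotient (⊤ : Setoid (ZMod p))) :=
      ⟨fun a b => Quotient.inductionOn₂ a b fun a b => Quotient.sound trivial⟩
    have : Nat.card (Quotient (⊤ : Setoid (ZMod p))) = 1 :=
      Nat.card_eq_one_iff_unique.2 ⟨this, ⟨Quotient.mk _ 0⟩⟩
    simp only [rank, this]
  have hbot_iff : ∀ s, 1 ≤ rank s ↔ s ≠ ⊥ := fun s =>
    ⟨fun h hs => by simp [hs, hbot] at h, fun h => hbot.symm.trans_lt (hrank (bot_lt_iff_ne_bot.2 h))⟩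
  have htop_iff : ∀ s, rank s < p - 1 ↔ s ≠ ⊤ := fun s =>
    ⟨fun h hs => by simp [hs, htop] at h, fun h => (hrank (lt_top_iff_ne_top.2 h)).trans_eq htop⟩
  let shift : Setoid (ZMod p) → Setoid (ZMod p) := Setoid.comap (· + 1)
  have hmem : ∀ s j k, shift s j k ↔ s (j + 1) (k + 1) := fun s j k => Setoid.comap_rel _ _ _ _
  have hiter : ∀ (n : ℕ) s j k, shift^[n] s j k ↔ s (j + n) (k + n) := by
    intro n
    induction n with
    | zero =>
      intro s j k
      rw [Nat.cast_zero, add_zero, add_zero, Function.iterate_zero, id]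
    | succ n ih =>
      intro s j k
      rw [Function.iterate_succ_apply, ih, hmem]
      push_cast
      rw [add_assoc, add_assoc]
  have key := HasLabelling.of_pattern (p := p) (X := X) (g := fun (x : ZMod p → α) k => x (k + 1)) hX
    (rank := rank) hrank (shift := shift) (m := p - 1) (pat := fun q x => proximity x (q * η))
    (δ := η / 2) (by ext s j k; rw [hiter]; simp) ?_ ?_ ?_ ?_ (half_pos hη) ?_
  · rw [show p - 2 = p - 1 - 1 by omega]
    convert key using 1
    ext x
    simp only [Set.mem_ofPred_eq, hbot_iff, htop_iff]
    refine and_congr_right fun _ => and_congr_left fun _ => ?_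
    rw [Ne, ← le_bot_iff, proximity_le_iff]
    simp only [Nat.cast_one, one_mul, Setoid.bot_def]
    push Not
    exact exists₂_congr fun j k => and_comm
  · intro s
    have : Nat.card (Quotient (shift s)) = Nat.card (Quotient s) :=
      Nat.card_congr (Quotient.congr (Equiv.addRight 1) fun a b => hmem s a b)
    simp only [rank, this]
  · intro s h1 h2 h
    rw [hbot_iff] at h1
    rw [htop_iff] at h2
    obtain ⟨j, k, hjk, hne⟩ : ∃ j k, s j k ∧ j ≠ k := by
      by_contra! hcon
      exact h1 (le_bot_iff.1 fun j k hjk => hcon j k hjk)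
    have htr : ∀ c, s (j + c) (k + c) := by
      intro c
      have h3 := hiter c.val s j k
      rw [Function.iterate_fixed h, ZMod.natCast_zmod_val] at h3
      exact h3.1 hjk
    have hmul : ∀ n : ℕ, s j (j + n * (k - j)) := by
      intro n
      induction n with
      | zero => simp
      | succ n ih =>
        refine s.trans' ih ?_
        convert htr (n * (k - j)) using 1
        push_cast
        ring
    refine h2 (top_le_iff.1 fun a b _ => ?_)
    have hall : ∀ a, s j a := by
      intro a
      have h3 := hmul ((a - j) / (k - j)).val
      rwa [ZMod.natCast_zmod_val, div_mul_cancel₀ _ (sub_ne_zero.2 hne.symm),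
        add_sub_cancel] at h3
    exact s.trans' (s.symm' (hall a)) (hall b)
  · intro q x
    apply le_antisymm
    · refine proximity_le_iff.2 fun j k h => (hmem _ _ _).2 (proximity_rel h)
    · have : proximity x (q * η) ≤
          Setoid.comap (· - 1) (proximity (fun k => x (k + 1)) (q * η)) :=
        proximity_le_iff.2 fun j k h => (Setoid.comap_rel _ _ _ _).2
          (proximity_rel (by simpa using h))
      intro j k h
      simpa [Setoid.comap_rel] using this ((hmem _ _ _).1 h)
  · intro x q q' hq
    refine proximity_le_iff.2 fun j k h => proximity_rel (h.trans_le ?_)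
    gcongr
  · intro x _ y _ hxy q
    refine proximity_le_iff.2 fun j k h => proximity_rel ?_
    have h1 := (dist_le_pi_dist x y j).trans_lt hxy
    have h2 := (dist_le_pi_dist x y k).trans_lt hxy
    have h3 := dist_triangle4 (y j) (x j) (x k) (y k)
    rw [dist_comm (y j) (x j)] at h3
    push_cast
    linarith

/-- The points of the standard simplex on `ZMod p × Fin d` with, for each `c`, at most `m c` non-zero
entries in the `c`-th coordinate. -/
def sparseSimplex (p : ℕ) [NeZero p] {d : ℕ} (m : Fin d → ℕ) : Set (ZMod p → Fin d → ℝ) :=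
  {x | (∀ k c, 0 ≤ x k c) ∧ ∑ k, ∑ c, x k c = 1 ∧
    ∀ c, ∃ T : Finset (ZMod p), T.card ≤ m c ∧ ∀ k ∉ T, x k c = 0}

namespace sparseSimplex

variable {p : ℕ} [NeZero p] {d : ℕ} {m : Fin d → ℕ}

theorem shift_mem_iff {x : ZMod p → Fin d → ℝ} :
    (fun k => x (k + 1)) ∈ sparseSimplex p m ↔ x ∈ sparseSimplex p m := by
  refine and_congr ?_ (and_congr ?_ (forall_congr' fun c => ?_))
  · exact (Equiv.addRight (1 : ZMod p)).forall_congr_left (p := fun k => ∀ c, 0 ≤ x (k + 1) c)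
      |>.trans (by simp)
  · rw [← Equiv.sum_comp (Equiv.addRight (1 : ZMod p)) fun k => ∑ c, x k c]
    rfl
  · constructor
    · rintro ⟨T, hT, h⟩
      refine ⟨T.map (Equiv.addRight (1 : ZMod p)).toEmbedding, by simpa using hT, fun k hk => ?_⟩
      simpa using h (k - 1) fun h => hk (by simpa [Finset.mem_map_equiv, sub_eq_add_neg] using h)
    · rintro ⟨T, hT, h⟩
      refine ⟨T.map (Equiv.addRight (-1 : ZMod p)).toEmbedding, by simpa using hT, fun k hk => ?_⟩
      exact h (k + 1) fun h => hk (by simpa [Finset.mem_map_equiv] using h)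

theorem isCompact : IsCompact (sparseSimplex p m) := by
  refine Metric.isCompact_of_isClosed_isBounded ?_ ?_
  · have : sparseSimplex p m = {x | ∀ k c, 0 ≤ x k c} ∩ ({x | ∑ k, ∑ c, x k c = 1} ∩
        ⋂ c, ⋃ T : {T : Finset (ZMod p) // T.card ≤ m c}, {x | ∀ k ∉ T.1, x k c = 0}) := by
      ext x
      simp [sparseSimplex]
    rw [this]
    refine IsClosed.inter ?_ (IsClosed.inter ?_ ?_)
    · simp only [Set.ofPred_forall]
      exact isClosed_iInter fun k => isClosed_iInter fun c =>
        isClosed_le continuous_const (by fun_prop)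
    · exact isClosed_eq (by fun_prop) continuous_const
    · refine isClosed_iInter fun c => isClosed_iUnion_of_finite fun T => ?_
      simp only [Set.ofPred_forall]
      exact isClosed_iInter fun k => isClosed_iInter fun _ =>
        isClosed_eq (by fun_prop) continuous_const
  · refine isBounded_iff_forall_norm_le.2 ⟨1, fun x hx => ?_⟩
    refine (pi_norm_le_iff_of_nonneg zero_le_one).2 fun k =>
      (pi_norm_le_iff_of_nonneg zero_le_one).2 fun c => ?_
    rw [Real.norm_of_nonneg (hx.1 k c), ← hx.2.1]
    exact (Finset.single_le_sum (f := fun c => x k c) (fun c _ => hx.1 k c)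
      (Finset.mem_univ c)).trans (Finset.single_le_sum (f := fun k => ∑ c, x k c)
      (fun k _ => Finset.sum_nonneg fun c _ => hx.1 k c) (Finset.mem_univ k))

theorem not_constant (hm : ∀ c, m c < p) {x : ZMod p → Fin d → ℝ} (hx : x ∈ sparseSimplex p m) :
    ∃ j k, x j ≠ x k := by
  by_contra! h
  have hzero : ∀ k c, x k c = 0 := by
    intro k c
    obtain ⟨T, hT, hT0⟩ := hx.2.2 c
    obtain ⟨j, hj⟩ : ∃ j, j ∉ T := by
      by_contra! hall
      rw [Finset.eq_univ_iff_forall.2 hall, Finset.card_univ, ZMod.card] at hT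
      exact absurd hT (hm c).not_ge
    rw [h k j, hT0 j hj]
  have := hx.2.1
  simp [hzero] at this

theorem single_mem {c : Fin d} (hc : 1 ≤ m c) :
    Pi.single 0 (Pi.single c 1) ∈ sparseSimplex p m := by
  refine ⟨fun k c' => ?_, ?_, fun c' => ?_⟩
  · by_cases hk : k = 0
    · subst hk
      by_cases h : c' = c
      · subst h
        simp
      · simp [h]
    · simp [hk]
  · rw [Fintype.sum_eq_single 0 fun k hk => by simp [hk]]
    simp
  · by_cases h : c' = c
    · subst h
      exact ⟨{0}, by simpa using hc, fun k hk => by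
        rw [Finset.mem_singleton] at hk
        simp [hk]⟩
    · refine ⟨∅, by simp, fun k _ => ?_⟩
      by_cases hk : k = 0
      · subst hk
        simp [h]
      · simp [hk]

theorem lineMap_single_mem {m' : Fin d → ℕ} {c : Fin d}
    (hm : ∀ c', m c' + (if c' = c then 1 else 0) ≤ m' c') {x : ZMod p → Fin d → ℝ}
    (hx : x ∈ sparseSimplex p m) {s : ℝ} (hs : s ∈ Set.Icc (0 : ℝ) 1) :
    AffineMap.lineMap x (Pi.single 0 (Pi.single c 1)) s ∈ sparseSimplex p m' := by
  have hv : (Pi.single 0 (Pi.single c 1) : ZMod p → Fin d → ℝ) ∈ sparseSimplex p fun _ => 1 :=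
    single_mem le_rfl
  set v : ZMod p → Fin d → ℝ := Pi.single 0 (Pi.single c 1) with hvdef
  have hval : ∀ k c', AffineMap.lineMap x v s k c' = (1 - s) * x k c' + s * v k c' := by
    intro k c'
    simp [AffineMap.lineMap_apply_module]
  have hs' : 0 ≤ 1 - s := sub_nonneg.2 hs.2
  refine ⟨fun k c' => ?_, ?_, fun c' => ?_⟩
  · rw [hval]
    exact add_nonneg (mul_nonneg hs' (hx.1 k c')) (mul_nonneg hs.1 (hv.1 k c'))
  · simp only [hval, Finset.sum_add_distrib, ← Finset.mul_sum]
    rw [hx.2.1, hv.2.1]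
    ring
  · obtain ⟨T, hT, hT0⟩ := hx.2.2 c'
    have hmc := hm c'
    by_cases h : c' = c
    · rw [if_pos h] at hmc
      refine ⟨insert 0 T, (Finset.card_insert_le _ _).trans (by omega), fun k hk => ?_⟩
      rw [Finset.mem_insert, not_or] at hk
      rw [hval, hT0 k hk.2, hvdef, Pi.single_eq_of_ne hk.1]
      simp
    · refine ⟨T, by omega, fun k hk => ?_⟩
      rw [hval, hT0 k hk, hvdef]
      by_cases hk0 : k = 0
      · subst hk0
        simp [h]
      · simp [hk0]

end sparseSimplex

theorem IsCompact.exists_pos_of_eventually {X : Type*} [TopologicalSpace X] {K : Set X}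
    (hK : IsCompact K) {P : ℝ → X → Prop}
    (h : ∀ x ∈ K, ∀ᶠ z : ℝ × X in nhds (0, x), P z.1 z.2) : ∃ ε > 0, ∀ x ∈ K, P ε x := by
  have h0 := (hK.eventually_forall_of_forall_eventually h).filter_mono
    (nhdsWithin_le_nhds (s := Set.Ioi (0 : ℝ)))
  obtain ⟨ε, h1, h2⟩ := (h0.and self_mem_nhdsWithin).exists
  exact ⟨ε, h2, h1⟩

theorem IsCompact.exists_proximity_ne_top {ι α : Type*} [Finite ι] [MetricSpace α]
    {K : Set (ι → α)} (hK : IsCompact K) (n : ℕ) (hne : ∀ x ∈ K, ∃ a b, x a ≠ x b) :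
    ∃ η > 0, ∀ x ∈ K, proximity x (n * η) ≠ ⊤ := by
  refine hK.exists_pos_of_eventually (P := fun η x => proximity x (n * η) ≠ ⊤) fun x hx => ?_
  obtain ⟨a, b, hab⟩ := hne x hx
  have : ∀ᶠ z : ℝ × (ι → α) in nhds (0, x), ∀ j k, x j ≠ x k →
      n * z.1 < dist (z.2 j) (z.2 k) := by
    refine Filter.eventually_all.2 fun j => Filter.eventually_all.2 fun k => ?_
    by_cases h : x j ≠ x k
    · have hc : ContinuousAt (fun z : ℝ × (ι → α) => n * z.1 - dist (z.2 j) (z.2 k)) (0, x) := by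
        fun_prop
      filter_upwards [hc.eventually_lt_const (u := 0) (by simpa using h)] with z hz _
      linarith
    · simp [h]
  filter_upwards [this] with z hz htop
  have hle : proximity z.2 (n * z.1) ≤ Setoid.ker x :=
    proximity_le_iff.2 fun j k hjk => by
      by_contra h
      exact (hz j k h).not_gt hjk
  rw [htop] at hle
  exact hab (hle trivial)

/-- `p` points in `ℝᵈ` can be chosen pairwise distinct so that `r < d` equivariant families of `p`
continuous functions are all constant. -/
theorem exists_injective_constant_values {p : ℕ} [Fact p.Prime] {d r : ℕ} (hr : r < d)
    {F : Fin r → (ZMod p → Fin d → ℝ) → ZMod p → ℝ} (hF : ∀ i, Continuous (F i))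
    (hFs : ∀ i x k, F i (fun k => x (k + 1)) k = F i x (k + 1)) :
    ∃ x : ZMod p → Fin d → ℝ, Function.Injective x ∧ ∀ i k l, F i x k = F i x l := by
  classical
  by_contra! hcon
  have hp : 2 ≤ p := (Fact.out : p.Prime).two_le
  have hd : 0 < d := by omega
  let cap : ℕ → Fin d → ℕ := fun n c => n.count (· ≡ c [MOD d])
  let color : ℕ → Fin d := fun n => ⟨n % d, Nat.mod_lt _ hd⟩
  have hcolor : ∀ (n : ℕ) (c : Fin d), n ≡ c [MOD d] ↔ c = color n := by
    intro n c
    simp only [color, Fin.ext_iff, Nat.ModEq, Nat.mod_eq_of_lt c.2]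
    exact eq_comm
  let A : ℕ → Set (ZMod p → Fin d → ℝ) := fun n => sparseSimplex p (cap (n + 1))
  have hpos : 0 < d * (p - 1) := Nat.mul_pos hd (by omega)
  obtain ⟨M, hM⟩ : ∃ M, M + 1 = d * (p - 1) := ⟨d * (p - 1) - 1, by omega⟩
  have hcap : ∀ c, cap (M + 1) c < p := by
    intro c
    simp only [cap]
    rw [Nat.count_modEq_card _ hd, hM, Nat.mul_mod_right, Nat.mul_div_cancel_left _ hd]
    simp
    omega
  have hvA : (Pi.single 0 (Pi.single (color 0) 1) : ZMod p → Fin d → ℝ) ∈ A 0 :=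
    sparseSimplex.single_mem (by simp [cap, Nat.count_succ, hcolor])
  have hcompact : IsCompact (A M) := sparseSimplex.isCompact
  have hshift : ∀ n x, (fun k => x (k + 1)) ∈ A n ↔ x ∈ A n :=
    fun n x => sparseSimplex.shift_mem_iff
  obtain ⟨η, hη, hηtop⟩ := hcompact.exists_proximity_ne_top (p - 1) fun x hx =>
    sparseSimplex.not_constant hcap hx
  obtain ⟨ε, hε, hcover⟩ : ∃ ε > 0, ∀ x ∈ A M, (∃ j k, j ≠ k ∧ dist (x j) (x k) < η) ∨
      ∃ i k l, F i x k + p * ε ≤ F i x l := by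
    refine hcompact.exists_pos_of_eventually (P := fun ε x =>
      (∃ j k, j ≠ k ∧ dist (x j) (x k) < η) ∨ ∃ i k l, F i x k + p * ε ≤ F i x l) fun x _ => ?_
    by_cases hx : Function.Injective x
    · obtain ⟨i, k, l, hkl⟩ : ∃ i k l, F i x k < F i x l := by
        obtain ⟨i, k, l, h⟩ := hcon x hx
        rcases h.lt_or_gt with h | h
        exacts [⟨i, k, l, h⟩, ⟨i, l, k, h⟩]
      have hc : Continuous fun z : ℝ × (ZMod p → Fin d → ℝ) =>
          F i z.2 k + p * z.1 - F i z.2 l := by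
        have := hF i
        fun_prop
      filter_upwards [(hc.tendsto (0, x)).eventually_lt_const (u := 0) (by simpa using hkl)]
        with z hz
      exact Or.inr ⟨i, k, l, by linarith⟩
    · obtain ⟨j, k, hjk, hne⟩ : ∃ j k, x j = x k ∧ j ≠ k := by
        simpa [Function.Injective] using hx
      have hc : Continuous fun z : ℝ × (ZMod p → Fin d → ℝ) => dist (z.2 j) (z.2 k) := by
        fun_prop
      filter_upwards [(hc.tendsto (0, x)).eventually_lt_const (u := η)
        (by simpa [hjk] using hη)] with z hz
      exact Or.inl ⟨j, k, hne, hz⟩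
  have hvalues : ∀ i, HasLabelling p (fun (x : ZMod p → Fin d → ℝ) k => x (k + 1))
      {x ∈ A M | ∃ k l, F i x k + p * ε ≤ F i x l} (p - 1) := by
    intro i
    obtain ⟨δ, hδ, hclose⟩ := Metric.uniformContinuousOn_iff.1
      (hcompact.uniformContinuousOn_of_continuous (hF i).continuousOn) (ε / 2) (half_pos hε)
    refine HasLabelling.of_values (hshift M) (hFs i) hε hδ fun x hx y hy hxy k => ?_
    rw [← Real.dist_eq]
    exact (dist_le_pi_dist _ _ k).trans_lt (hclose x hx y hy hxy)
  have hlab := (HasLabelling.iUnion hvalues).union (HasLabelling.of_proximity (hshift M) hη)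
  obtain ⟨-, κ, lev, δ, hδ, hκ, hloc⟩ := hlab
  have hmem : ∀ x ∈ A M, x ∈ (⋃ i, {x ∈ A M | ∃ k l, F i x k + p * ε ≤ F i x l}) ∪
      {x ∈ A M | (∃ j k, j ≠ k ∧ dist (x j) (x k) < η) ∧
        proximity x ((p - 1 : ℕ) * η) ≠ ⊤} := by
    intro x hx
    rcases hcover x hx with h | ⟨i, h⟩
    · exact Or.inr ⟨hx, h, hηtop x hx⟩
    · exact Or.inl (Set.mem_iUnion.2 ⟨i, hx, h⟩)
  have hlevels : r * (p - 1) + (p - 2) ≤ M := by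
    have := Nat.mul_le_mul_right (p - 1) (Nat.succ_le_of_lt hr)
    rw [Nat.succ_mul] at this
    omega
  have hlt : ∀ x ∈ A M, lev x < M := fun x hx => (hκ x (hmem x hx)).2.2.trans_le hlevels
  have hiter : ∀ n, (fun (x : ZMod p → Fin d → ℝ) k => x (k + 1))^[n] =
      fun x k => x (k + n) := by
    intro n
    induction n with
    | zero => simp [funext_iff]
    | succ n ih =>
      ext x k
      rw [Function.iterate_succ_apply, ih]
      push_cast
      rw [add_assoc]
  have hM0 : 0 < M := by
    rcases Nat.eq_zero_or_pos M with h | h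
    · have := hlt _ (h ▸ hvA)
      omega
    · exact h
  refine ListChain.no_labelling (p := p) (g := fun (x : ZMod p → Fin d → ℝ) k => x (k + 1))
    (A := A) (v := fun n => Pi.single 0 (Pi.single (color n) 1)) ?_ ?_
    (fun n x hx => (hshift n x).2 hx) hvA (fun n => sparseSimplex.isCompact.isBounded) ?_ κ
    (fun x => if h : lev x < M then ⟨lev x, h⟩ else ⟨0, hM0⟩) hδ
    (fun x hx => (hκ x (hmem x hx)).1) ?_ ?_
  · ext x
    simp [hiter]
  · exact (IsometryEquiv.piCongrLeft' (Y := fun _ : ZMod p => Fin d → ℝ)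
      (Equiv.addRight (1 : ZMod p)).symm).isometry
  · intro n x hx s hs
    refine sparseSimplex.lineMap_single_mem (fun c => ?_) hx hs
    simp only [cap, Nat.count_succ, hcolor]
    exact le_rfl
  · intro x hx
    simp only [(hκ x (hmem x hx)).2.1]
  · intro x hx y hy hxy h
    rw [dif_pos (hlt x hx), dif_pos (hlt y hy), Fin.mk.injEq] at h
    exact hloc x (hmem x hx) y (hmem y hy) hxy h

theorem IsMetricEquivToStd.continuous {E : Type*} [TopologicalSpace E] {ρ : E → E → ℝ}
    (h : IsMetricEquivToStd ρ) : Continuous fun z : E × E => ρ z.1 z.2 := by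
  obtain ⟨hsymm, hzero, htri, hopen⟩ := h
  have hball : ∀ a, ∀ ε > 0, ∀ᶠ x in nhds a, ρ a x < ε := by
    intro a ε hε
    refine IsOpen.mem_nhds ((hopen {x | ρ a x < ε}).2 fun x hx => ?_) ?_
    · refine ⟨ε - ρ a x, sub_pos.2 hx, fun y hy => ?_⟩
      have hy' : ρ x y < ε - ρ a x := hy
      exact (htri a x y).trans_lt (by linarith)
    · exact ((hzero a a).2 rfl).trans_lt hε
  refine continuous_iff_continuousAt.2 fun ⟨a, b⟩ => Metric.tendsto_nhds.2 fun ε hε => ?_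
  filter_upwards [(hball a _ (half_pos hε)).prod_nhds (hball b _ (half_pos hε))] with z hz
  have h1 := htri z.1 a z.2
  have h2 := htri a b z.2
  have h3 := htri a z.1 b
  have h4 := htri z.1 z.2 b
  rw [hsymm z.1 a] at h1
  rw [hsymm z.2 b] at h4
  rw [Real.dist_eq, abs_lt]
  constructor <;> linarith [hz.1, hz.2]

/-- Theorem 2 (main theorem): existence of points whose `p`-gons `C_{tᵢ}` are
`ρᵢ`-equilateral, for `d > r`. -/
theorem exists_pgons_equilateral
    (p d r : ℕ) (hp : p.Prime) (hodd : Odd p) (hd : 0 < d) (hr : 0 < r) (hdr : d > r)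
    (ρ : Fin r → EuclideanSpace ℝ (Fin d) → EuclideanSpace ℝ (Fin d) → ℝ)
    (hρ : ∀ i, IsMetricEquivToStd (ρ i))
    (t : Fin r → ℕ) (ht : ∀ i, 1 ≤ t i ∧ t i ≤ (p - 1) / 2) :
    ∃ x : ZMod p → EuclideanSpace ℝ (Fin d),
      Function.Injective x ∧
      ∀ i : Fin r, ∀ k : ZMod p,
        ρ i (x (k * (t i : ZMod p))) (x ((k + 1) * (t i : ZMod p))) =
          ρ i (x 0) (x (t i : ZMod p)) := by
  have : Fact p.Prime := ⟨hp⟩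
  obtain ⟨x, hx, h⟩ := exists_injective_constant_values (p := p) hdr
    (F := fun i x k => ρ i (WithLp.toLp 2 (x k)) (WithLp.toLp 2 (x (k + t i))))
    (fun i => continuous_pi fun k => (hρ i).continuous.comp (g := fun z => ρ i z.1 z.2)
      (f := fun x : ZMod p → Fin d → ℝ => (WithLp.toLp 2 (x k), WithLp.toLp 2 (x (k + t i))))
      (by fun_prop))
    fun i x k => by simp only [add_right_comm]
  refine ⟨fun k => WithLp.toLp 2 (x k), (WithLp.toLp_injective 2).comp hx, fun i k => ?_⟩
  simpa [add_mul] using h i (k * t i) 0
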